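/- (Whitney extension, Lip(1+γ) case.) Let Ω be a closed subset of ℝ^n, γ ∈ (0,1], and let f : Ω → ℝ^{d′} and G : Ω → L(ℝ^n, ℝ^{d′}) satisfy, for a constant H: ‖f(u)‖ ≤ H and ‖G(u)‖ ≤ H for all u ∈ Ω, ‖G(u) − G(u′)‖ ≤ H ‖u − u′‖^γ for all u, u′ ∈ Ω, and ‖f(u) − f(u′) − G(u′)(u − u′)‖ ≤ H ‖u − u′‖^{1+γ} for all u, u′ ∈ Ω. Then there exists a differentiable function F : ℝ^n → ℝ^{d′} such that F = f and DF = G on Ω, and such that ‖F‖_∞ ≤ cH, ‖DF‖_∞ ≤ cH, and DF is γ-Hölder on ℝ^n with constant cH, where c depends only on γ and n. -/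

import Mathlib

noncomputable section

/-- `E n` is the Euclidean space `ℝ^n`. -/
abbrev E (n : ℕ) : Type := EuclideanSpace ℝ (Fin n)

open Metric Set

section ScaledBounds

variable {X V : Type*} [NormedAddCommGroup X] [NormedSpace ℝ X]
  [NormedAddCommGroup V] [NormedSpace ℝ V]

/-- `h` is differentiable on `U`, and `h`, its derivative and the Lipschitz constant of its
derivative are bounded there by `a`, `a / r` and `a / r ^ 2`. -/
structure ScaledC11On (U : Set X) (h : X → V) (a r : ℝ) : Prop where
  differentiableAt : ∀ x ∈ U, DifferentiableAt ℝ h x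
  norm_le : ∀ x ∈ U, ‖h x‖ ≤ a
  norm_fderiv_le : ∀ x ∈ U, ‖fderiv ℝ h x‖ ≤ a / r
  norm_fderiv_sub_le : ∀ x ∈ U, ∀ y ∈ U, ‖fderiv ℝ h x - fderiv ℝ h y‖ ≤ a / r ^ 2 * ‖x - y‖

namespace ScaledC11On

variable {U : Set X} {h g : X → V} {s : X → ℝ} {a b r : ℝ}

theorem of_hasFDerivAt {h' : X → X →L[ℝ] V} (hd : ∀ x ∈ U, HasFDerivAt h (h' x) x)
    (h0 : ∀ x ∈ U, ‖h x‖ ≤ a) (h1 : ∀ x ∈ U, ‖h' x‖ ≤ a / r)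
    (h2 : ∀ x ∈ U, ∀ y ∈ U, ‖h' x - h' y‖ ≤ a / r ^ 2 * ‖x - y‖) : ScaledC11On U h a r where
  differentiableAt x hx := (hd x hx).differentiableAt
  norm_le := h0
  norm_fderiv_le x hx := by rw [(hd x hx).fderiv]; exact h1 x hx
  norm_fderiv_sub_le x hx y hy := by rw [(hd x hx).fderiv, (hd y hy).fderiv]; exact h2 x hx y hy

theorem congr (hh : ScaledC11On U h a r) (hU : IsOpen U) (hg : ∀ x ∈ U, g x = h x) :
    ScaledC11On U g a r := by
  have he : ∀ x ∈ U, g =ᶠ[nhds x] h := fun x hx =>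
    Filter.eventuallyEq_of_mem (hU.mem_nhds hx) hg
  refine of_hasFDerivAt (h' := fderiv ℝ h)
    (fun x hx => (hh.differentiableAt x hx).hasFDerivAt.congr_of_eventuallyEq (he x hx))
    (fun x hx => ?_) hh.norm_fderiv_le hh.norm_fderiv_sub_le
  rw [hg x hx]
  exact hh.norm_le x hx

theorem mono_const (hh : ScaledC11On U h a r) (hr : 0 < r) (hab : a ≤ b) :
    ScaledC11On U h b r where
  differentiableAt := hh.differentiableAt
  norm_le x hx := (hh.norm_le x hx).trans hab
  norm_fderiv_le x hx := (hh.norm_fderiv_le x hx).trans (by gcongr)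
  norm_fderiv_sub_le x hx y hy := (hh.norm_fderiv_sub_le x hx y hy).trans (by gcongr)

theorem norm_sub_le (hh : ScaledC11On U h a r) (hU : Convex ℝ U) {x y : X} (hx : x ∈ U)
    (hy : y ∈ U) : ‖h x - h y‖ ≤ a / r * ‖x - y‖ :=
  hU.norm_image_sub_le_of_norm_fderiv_le hh.differentiableAt hh.norm_fderiv_le hy hx

theorem sum {ι : Type*} {t : Finset ι} {h : ι → X → V}
    (hh : ∀ i ∈ t, ScaledC11On U (h i) a r) :
    ScaledC11On U (fun x => ∑ i ∈ t, h i x) (t.card * a) r := by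
  refine of_hasFDerivAt (h' := fun x => ∑ i ∈ t, fderiv ℝ (h i) x)
    (fun x hx => HasFDerivAt.fun_sum fun i hi => ((hh i hi).differentiableAt x hx).hasFDerivAt)
    (fun x hx => ?_) (fun x hx => ?_) (fun x hx y hy => ?_)
  · refine (norm_sum_le_of_le t fun i hi => (hh i hi).norm_le x hx).trans_eq ?_
    simp
  · refine (norm_sum_le_of_le t fun i hi => (hh i hi).norm_fderiv_le x hx).trans_eq ?_
    simp [mul_div_assoc]
  · rw [← Finset.sum_sub_distrib]
    refine (norm_sum_le_of_le t fun i hi => (hh i hi).norm_fderiv_sub_le x hx y hy).trans_eq ?_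
    simp only [Finset.sum_const, nsmul_eq_mul]
    ring

theorem smul (hs : ScaledC11On U s a r) (hg : ScaledC11On U g b r) (hU : Convex ℝ U)
    (ha : 0 ≤ a) (hb : 0 ≤ b) (hr : 0 < r) :
    ScaledC11On U (fun x => s x • g x) (4 * (a * b)) r := by
  refine of_hasFDerivAt
    (h' := fun x => s x • fderiv ℝ g x + (fderiv ℝ s x).smulRight (g x))
    (fun x hx => (hs.differentiableAt x hx).hasFDerivAt.fun_smul
      (hg.differentiableAt x hx).hasFDerivAt)
    (fun x hx => ?_) (fun x hx => ?_) (fun x hx y hy => ?_)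
  · rw [norm_smul]
    have := mul_le_mul (hs.norm_le x hx) (hg.norm_le x hx) (norm_nonneg _) ha
    nlinarith [mul_nonneg ha hb]
  · have h1 := mul_le_mul (hs.norm_le x hx) (hg.norm_fderiv_le x hx) (norm_nonneg _) ha
    have h2 := mul_le_mul (hs.norm_fderiv_le x hx) (hg.norm_le x hx) (norm_nonneg _)
      (by positivity)
    refine (norm_add_le _ _).trans ?_
    rw [norm_smul, ContinuousLinearMap.norm_smulRight_apply]
    have h3 : 0 ≤ a * b / r := by positivity
    calc _ ≤ a * (b / r) + a / r * b := add_le_add h1 h2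
      _ = 2 * (a * b / r) := by ring
      _ ≤ 4 * (a * b / r) := by linarith
      _ = _ := by ring
  · have key : (s x • fderiv ℝ g x + (fderiv ℝ s x).smulRight (g x)) -
        (s y • fderiv ℝ g y + (fderiv ℝ s y).smulRight (g y)) =
        (s x • (fderiv ℝ g x - fderiv ℝ g y) + (s x - s y) • fderiv ℝ g y) +
        ((fderiv ℝ s x - fderiv ℝ s y).smulRight (g x) +
          (fderiv ℝ s y).smulRight (g x - g y)) := by
      ext v
      simp only [add_apply, sub_apply,
        smul_apply, ContinuousLinearMap.smulRight_apply]
      module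
    rw [key]
    have h1 := mul_le_mul (hs.norm_le x hx) (hg.norm_fderiv_sub_le x hx y hy) (norm_nonneg _) ha
    have h2 := mul_le_mul (hs.norm_sub_le hU hx hy) (hg.norm_fderiv_le y hy) (norm_nonneg _)
      (by positivity)
    have h3 := mul_le_mul (hs.norm_fderiv_sub_le x hx y hy) (hg.norm_le x hx) (norm_nonneg _)
      (by positivity)
    have h4 := mul_le_mul (hs.norm_fderiv_le y hy) (hg.norm_sub_le hU hx hy) (norm_nonneg _)
      (by positivity)
    refine (norm_add_le_of_le (norm_add_le _ _) (norm_add_le _ _)).trans ?_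
    simp only [norm_smul, ContinuousLinearMap.norm_smulRight_apply]
    refine (add_le_add (add_le_add h1 h2) (add_le_add h3 h4)).trans_eq ?_
    field_simp
    ring

theorem inv (hs : ScaledC11On U s a r) (hU : Convex ℝ U) (h1 : ∀ x ∈ U, 1 ≤ s x)
    (ha : 1 ≤ a) (hr : 0 < r) : ScaledC11On U (fun x => (s x)⁻¹) (3 * a ^ 2) r := by
  have h0 : ∀ x ∈ U, s x ≠ 0 := fun x hx => (zero_lt_one.trans_le (h1 x hx)).ne'
  have hsq : ∀ x ∈ U, ‖-(s x ^ 2)⁻¹‖ ≤ 1 := fun x hx => by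
    rw [norm_neg, Real.norm_eq_abs, abs_of_nonneg (by positivity)]
    exact inv_le_one_of_one_le₀ (one_le_pow₀ (h1 x hx))
  have haa : a ≤ 3 * a ^ 2 := by nlinarith
  refine of_hasFDerivAt (h' := fun x => (-(s x ^ 2)⁻¹) • fderiv ℝ s x)
    (fun x hx => (hasDerivAt_inv (h0 x hx)).comp_hasFDerivAt x
      (hs.differentiableAt x hx).hasFDerivAt)
    (fun x hx => ?_) (fun x hx => ?_) (fun x hx y hy => ?_)
  · rw [Real.norm_eq_abs, abs_of_nonneg (inv_nonneg.2 (zero_le_one.trans (h1 x hx)))]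
    exact (inv_le_one_of_one_le₀ (h1 x hx)).trans (by linarith)
  · rw [norm_smul]
    calc _ ≤ 1 * (a / r) := mul_le_mul (hsq x hx) (hs.norm_fderiv_le x hx) (norm_nonneg _)
          zero_le_one
      _ ≤ _ := by rw [one_mul]; gcongr
  · have key : (-(s x ^ 2)⁻¹) • fderiv ℝ s x - (-(s y ^ 2)⁻¹) • fderiv ℝ s y =
        (-(s x ^ 2)⁻¹) • (fderiv ℝ s x - fderiv ℝ s y) +
          ((s y ^ 2)⁻¹ - (s x ^ 2)⁻¹) • fderiv ℝ s y := by module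
    have hdiff : ‖(s y ^ 2)⁻¹ - (s x ^ 2)⁻¹‖ ≤ 2 * (a / r * ‖x - y‖) := by
      have e : (s y ^ 2)⁻¹ - (s x ^ 2)⁻¹ =
          (s x - s y) * ((s x)⁻¹ * ((s y)⁻¹ * (s y)⁻¹) + ((s x)⁻¹ * (s x)⁻¹) * (s y)⁻¹) := by
        have := h0 x hx
        have := h0 y hy
        field_simp
        ring
      have px : 0 ≤ (s x)⁻¹ := inv_nonneg.2 (zero_le_one.trans (h1 x hx))
      have py : 0 ≤ (s y)⁻¹ := inv_nonneg.2 (zero_le_one.trans (h1 y hy))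
      have qx := inv_le_one_of_one_le₀ (h1 x hx)
      have qy := inv_le_one_of_one_le₀ (h1 y hy)
      have b1 : (s x)⁻¹ * ((s y)⁻¹ * (s y)⁻¹) ≤ 1 :=
        mul_le_one₀ qx (by positivity) (mul_le_one₀ qy py qy)
      have b2 : ((s x)⁻¹ * (s x)⁻¹) * (s y)⁻¹ ≤ 1 :=
        mul_le_one₀ (mul_le_one₀ qx px qx) py qy
      rw [e, norm_mul, mul_comm]
      refine mul_le_mul ?_ (hs.norm_sub_le hU hx hy) (norm_nonneg _) zero_le_two
      rw [Real.norm_eq_abs, abs_of_nonneg (by positivity)]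
      linarith
    rw [key]
    refine (norm_add_le _ _).trans ?_
    rw [norm_smul, norm_smul]
    have t1 := mul_le_mul (hsq x hx) (hs.norm_fderiv_sub_le x hx y hy) (norm_nonneg _) zero_le_one
    have t2 := mul_le_mul hdiff (hs.norm_fderiv_le y hy) (norm_nonneg _) (by positivity)
    calc _ ≤ 1 * (a / r ^ 2 * ‖x - y‖) + 2 * (a / r * ‖x - y‖) * (a / r) := add_le_add t1 t2
      _ = (a + 2 * a ^ 2) / r ^ 2 * ‖x - y‖ := by field_simp
      _ ≤ _ := by gcongr; nlinarith

end ScaledC11On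

end ScaledBounds

theorem exists_card_le_of_separated (X : Type*) [NormedAddCommGroup X] [NormedSpace ℝ X]
    [FiniteDimensional ℝ X] (R : ℝ) {ε : ℝ} (hε : 0 < ε) :
    ∃ N : ℕ, ∀ (x₀ : X) (δ : ℝ) (s : Set X), 0 < δ → (∀ x ∈ s, ‖x - x₀‖ ≤ R * δ) →
      (∀ x ∈ s, ∀ y ∈ s, x ≠ y → ε * δ ≤ ‖x - y‖) → s.Finite ∧ s.ncard ≤ N := by
  have : ProperSpace X := FiniteDimensional.proper ℝ X
  obtain ⟨t, -, htf, ht⟩ :=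
    finite_cover_balls_of_compact (isCompact_closedBall (0 : X) R) (half_pos hε)
  refine ⟨t.ncard, fun x₀ δ s hδ hs hsep => ?_⟩
  have hex : ∀ x : X, ∃ y : X, x ∈ s → y ∈ t ∧ ‖δ⁻¹ • (x - x₀) - y‖ < ε / 2 := fun x => by
    by_cases hx : x ∈ s
    · have hmem : δ⁻¹ • (x - x₀) ∈ closedBall (0 : X) R := by
        rw [mem_closedBall_zero_iff, norm_smul, Real.norm_of_nonneg (by positivity),
          inv_mul_le_iff₀ hδ, mul_comm]
        exact hs x hx
      obtain ⟨y, hy, hxy⟩ := mem_iUnion₂.1 (ht hmem)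
      exact ⟨y, fun _ => ⟨hy, by rwa [mem_ball_iff_norm] at hxy⟩⟩
    · exact ⟨0, fun h => absurd h hx⟩
  choose g hg using hex
  have hinj : InjOn g s := fun x hx y hy hxy => by
    by_contra hne
    have h1 := (hg x hx).2
    have h2 := (hg y hy).2
    rw [hxy] at h1
    have h3 : ‖δ⁻¹ • (x - y)‖ < ε := by
      have e : δ⁻¹ • (x - y) = (δ⁻¹ • (x - x₀) - g y) - (δ⁻¹ • (y - x₀) - g y) := by module
      rw [e]
      exact (norm_sub_le _ _).trans_lt (by linarith)
    rw [norm_smul, Real.norm_of_nonneg (by positivity), inv_mul_lt_iff₀ hδ] at h3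
    linarith [hsep x hx y hy hne]
  exact ⟨htf.of_injOn (fun x hx => (hg x hx).1) hinj,
    ncard_le_ncard_of_injOn g (fun x hx => (hg x hx).1) hinj htf⟩

/-- A compactly supported plateau function, with bounds for its rescaled translates. -/
theorem exists_scaled_bump (X : Type*) [NormedAddCommGroup X] [InnerProductSpace ℝ X]
    [FiniteDimensional ℝ X] :
    ∃ (B : X → ℝ) (M : ℝ), 1 ≤ M ∧ (∀ x, 0 ≤ B x) ∧ (∀ x, ‖x‖ ≤ 1 / 4 → B x = 1) ∧
      (∀ x, 1 / 2 ≤ ‖x‖ → B x = 0) ∧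
      ∀ (c : X) (δ r : ℝ), 0 < r → r ≤ 2 * δ →
        ScaledC11On univ (fun x => B (δ⁻¹ • (x - c))) (4 * M) r := by
  let B : ContDiffBump (0 : X) := ⟨1 / 4, 1 / 2, by norm_num, by norm_num⟩
  have hB : ContDiff ℝ 2 B := B.contDiff
  have hB' : ContDiff ℝ 1 (fderiv ℝ B) := hB.fderiv_right (by norm_num)
  have hcs := B.hasCompactSupport
  obtain ⟨M₁, hM₁⟩ := (hcs.fderiv ℝ).exists_bound_of_continuous hB'.continuous
  obtain ⟨M₂, hM₂⟩ := hB'.lipschitzWith_of_hasCompactSupport (hcs.fderiv ℝ) one_ne_zero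
  have hMpos : 0 < max 1 (max M₁ M₂) := zero_lt_one.trans_le (le_max_left _ _)
  have m1 : M₁ ≤ max 1 (max M₁ M₂) := (le_max_left _ _).trans (le_max_right _ _)
  have m2 : (M₂ : ℝ) ≤ max 1 (max M₁ M₂) := (le_max_right _ _).trans (le_max_right _ _)
  have m0 := le_max_left 1 (max M₁ M₂)
  generalize max 1 (max M₁ (M₂ : ℝ)) = M at *
  refine ⟨B, M, m0, fun x => B.nonneg,
    fun x hx => B.one_of_mem_closedBall (mem_closedBall_zero_iff.2 hx),
    fun x hx => B.zero_of_le_dist (by rwa [dist_zero_right]), fun c δ r hr hrδ => ?_⟩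
  have hδ : 0 < δ := by linarith
  have hinv : δ⁻¹ ≤ 2 / r := by
    rw [inv_le_comm₀ hδ (by positivity), inv_div]; linarith
  have hd : ∀ x, HasFDerivAt (fun x => B (δ⁻¹ • (x - c)))
      (δ⁻¹ • fderiv ℝ B (δ⁻¹ • (x - c))) x := fun x => by
    have h1 : HasFDerivAt B (fderiv ℝ B (δ⁻¹ • (x - c))) (δ⁻¹ • (x - c)) :=
      ((hB.differentiable (by norm_num)) _).hasFDerivAt
    have h2 : HasFDerivAt (fun x : X => δ⁻¹ • (x - c)) (δ⁻¹ • ContinuousLinearMap.id ℝ X) x :=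
      ((hasFDerivAt_id x).sub_const c).const_smul δ⁻¹
    have h3 := h1.comp x h2
    rwa [ContinuousLinearMap.comp_smul, ContinuousLinearMap.comp_id] at h3
  refine ScaledC11On.of_hasFDerivAt (fun x _ => hd x) (fun x _ => ?_) (fun x _ => ?_)
    (fun x _ y _ => ?_)
  · rw [Real.norm_of_nonneg B.nonneg]
    exact B.le_one.trans (by linarith)
  · rw [norm_smul, Real.norm_of_nonneg (by positivity)]
    calc _ ≤ 2 / r * M := mul_le_mul hinv ((hM₁ _).trans m1) (norm_nonneg _) (by positivity)
      _ ≤ 4 / r * M := by gcongr; norm_num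
      _ = _ := by ring
  · rw [← smul_sub, norm_smul, Real.norm_of_nonneg (by positivity)]
    have h1 := hM₂.norm_sub_le (δ⁻¹ • (x - c)) (δ⁻¹ • (y - c))
    rw [← smul_sub, norm_smul, Real.norm_of_nonneg (by positivity), sub_sub_sub_cancel_right] at h1
    calc _ ≤ δ⁻¹ * (M₂ * (δ⁻¹ * ‖x - y‖)) := by gcongr
      _ ≤ 2 / r * (M * (2 / r * ‖x - y‖)) := by gcongr
      _ = _ := by ring

/-- A partition of unity on the complement of a closed set, subordinate to balls whose radii are
comparable to the distance to the set. -/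
theorem exists_whitney_partition (X : Type*) [NormedAddCommGroup X] [InnerProductSpace ℝ X]
    [FiniteDimensional ℝ X] :
    ∃ (N : ℕ) (K : ℝ), 0 ≤ K ∧ ∀ (Ω : Set X) (R : ℝ), IsClosed Ω → Ω.Nonempty →
      (∀ x, infDist x Ω ≤ R) → ∃ φ : X → X → ℝ, ∀ x₀ ∉ Ω, ∃ I : Finset X, I.card ≤ N ∧
        (∀ b ∈ I, ‖b - x₀‖ ≤ 2 * infDist x₀ Ω ∧
          ScaledC11On (ball x₀ (infDist x₀ Ω / 8)) (φ b) K (infDist x₀ Ω)) ∧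
        (∀ b ∉ I, ∀ x ∈ ball x₀ (infDist x₀ Ω / 8), φ b x = 0) ∧
        ∀ x ∈ ball x₀ (infDist x₀ Ω / 8), ∑ b ∈ I, φ b x = 1 := by
  classical
  obtain ⟨B, M, hM, hB0, hB1, hBz, hBs⟩ := exists_scaled_bump X
  obtain ⟨N, hN⟩ := exists_card_le_of_separated X 2 (ε := 1 / 40) (by norm_num)
  refine ⟨N, 4 * (3 * ((N + 1) * (4 * M)) ^ 2 * (4 * M)), by positivity,
    fun Ω R hΩ hne hR => ?_⟩
  have hpos : ∀ x ∉ Ω, 0 < infDist x Ω := fun x hx => (hΩ.notMem_iff_infDist_pos hne).1 hx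
  obtain ⟨u, huΩ, hdisj, hcov⟩ := Vitali.exists_disjoint_subfamily_covering_enlargement_closedBall
    Ωᶜ (fun x => x) (fun x => infDist x Ω / 20) (R / 20) (fun a _ => by linarith [hR a]) 5
    (by norm_num)
  let ψ : X → X → ℝ := fun b x => if b ∈ u then B ((infDist b Ω)⁻¹ • (x - b)) else 0
  have hψ0 : ∀ b x, 0 ≤ ψ b x := fun b x => by
    simp only [ψ]; split_ifs <;> simp [hB0]
  let σ : X → ℝ := fun x => ∑ᶠ b, ψ b x
  refine ⟨fun b x => (σ x)⁻¹ • ψ b x, fun x₀ hx₀ => ?_⟩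
  have hδ := hpos x₀ hx₀
  set δ := infDist x₀ Ω with hδdef
  have hdist : ∀ x y : X, infDist x Ω ≤ infDist y Ω + ‖x - y‖ := fun x y => by
    rw [← dist_eq_norm]; exact infDist_le_infDist_add_dist
  have hball : ∀ x ∈ ball x₀ (δ / 8), ‖x - x₀‖ < δ / 8 := fun x hx => mem_ball_iff_norm.1 hx
  let s : Set X := {b | b ∈ u ∧ ‖b - x₀‖ ≤ 2 * δ ∧ δ / 2 ≤ infDist b Ω}
  obtain ⟨hsf, hsc⟩ := hN x₀ δ s hδ (fun b hb => hb.2.1) fun b hb c hc hbc => by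
    have h1 := disjoint_left.1 (hdisj hb.1 hc.1 hbc)
      (mem_closedBall_self (by linarith [hb.2.2]))
    rw [mem_closedBall_iff_norm, not_le] at h1
    linarith [hc.2.2]
  have hout : ∀ b ∉ s, ∀ x ∈ ball x₀ (δ / 8), ψ b x = 0 := fun b hb x hx => by
    simp only [ψ]
    split_ifs with hbu
    · have hb0 := hpos b (huΩ hbu)
      by_contra hne0
      have h1 : ‖(infDist b Ω)⁻¹ • (x - b)‖ < 1 / 2 := by
        by_contra! h
        exact hne0 (hBz _ h)
      rw [norm_smul, Real.norm_of_nonneg (by positivity), inv_mul_lt_iff₀ hb0] at h1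
      have h2 := hball x hx
      have h3 := hdist b x
      have h4 := hdist x x₀
      have h5 := hdist x₀ x
      have h6 := hdist x b
      have h7 := norm_sub_rev b x
      have h8 := norm_sub_rev x₀ x
      have h9 : ‖b - x₀‖ ≤ ‖b - x‖ + ‖x - x₀‖ := by
        simpa using norm_add_le (b - x) (x - x₀)
      exact hb ⟨hbu, by linarith, by linarith⟩
    · rfl
  have hσ : ∀ x ∈ ball x₀ (δ / 8), σ x = ∑ b ∈ hsf.toFinset, ψ b x := fun x hx =>
    finsum_eq_sum_of_support_subset _ fun b hb => by
      rw [Finite.coe_toFinset]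
      by_contra h
      exact hb (hout b h x hx)
  have hσ1 : ∀ x ∈ ball x₀ (δ / 8), 1 ≤ σ x := fun x hx => by
    have h2 := hball x hx
    have h5 := hdist x₀ x
    have h8 := norm_sub_rev x₀ x
    have hxΩ : x ∉ Ω := fun h => by linarith [infDist_zero_of_mem h]
    obtain ⟨b, hbu, hb⟩ := hcov x hxΩ
    have hb0 := hpos b (huΩ hbu)
    have hxb := hb (mem_closedBall_self (by linarith [hpos x hxΩ]))
    rw [mem_closedBall_iff_norm] at hxb
    have hψb : ψ b x = 1 := by
      simp only [ψ, if_pos hbu]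
      refine hB1 _ ?_
      rw [norm_smul, Real.norm_of_nonneg (by positivity), inv_mul_le_iff₀ hb0]
      linarith
    have hbs : b ∈ hsf.toFinset := by
      rw [Finite.mem_toFinset]
      by_contra h
      rw [hout b h x hx] at hψb
      exact zero_ne_one hψb
    rw [hσ x hx, ← hψb]
    exact Finset.single_le_sum (fun c _ => hψ0 c x) hbs
  have hcard : hsf.toFinset.card ≤ N := by rwa [← ncard_eq_toFinset_card s hsf]
  have hψs : ∀ b ∈ s, ScaledC11On (ball x₀ (δ / 8)) (ψ b) (4 * M) δ := fun b hb => by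
    have h1 := hBs b (infDist b Ω) δ hδ (by linarith [hb.2.2])
    have h2 : ψ b = fun x => B ((infDist b Ω)⁻¹ • (x - b)) := by
      funext x; simp only [ψ, if_pos hb.1]
    rw [h2]
    exact ⟨fun x _ => h1.differentiableAt x trivial, fun x _ => h1.norm_le x trivial,
      fun x _ => h1.norm_fderiv_le x trivial,
      fun x _ y _ => h1.norm_fderiv_sub_le x trivial y trivial⟩
  have hσs : ScaledC11On (ball x₀ (δ / 8)) σ ((N + 1) * (4 * M)) δ := by
    refine ((ScaledC11On.sum fun b hb => hψs b (hsf.mem_toFinset.1 hb)).congr isOpen_ball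
      hσ).mono_const hδ ?_
    have : (hsf.toFinset.card : ℝ) ≤ N := by exact_mod_cast hcard
    gcongr
    linarith
  have hconv := convex_ball x₀ (δ / 8)
  have hone : 1 ≤ ((N : ℝ) + 1) * (4 * M) := by
    have : (0 : ℝ) ≤ N := N.cast_nonneg
    nlinarith
  refine ⟨hsf.toFinset, hcard, fun b hb => ?_, fun b hb x hx => ?_, fun x hx => ?_⟩
  · rw [Finite.mem_toFinset] at hb
    exact ⟨hb.2.1, (hσs.inv hconv hσ1 hone hδ).smul (hψs b hb) hconv (by positivity)
      (by positivity) hδ⟩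
  · rw [Finite.mem_toFinset] at hb
    simp only [hout b hb x hx, smul_zero]
  · rw [← Finset.smul_sum, ← hσ x hx, smul_eq_mul,
      inv_mul_cancel₀ (zero_lt_one.trans_le (hσ1 x hx)).ne']

section Jets

variable {X V : Type*} [NormedAddCommGroup X] [NormedSpace ℝ X]
  [NormedAddCommGroup V] [NormedSpace ℝ V]

/-- The first-order Taylor polynomial at `p` of the jet `(f, G)`. -/
def taylorAt (f : X → V) (G : X → X →L[ℝ] V) (p x : X) : V := f p + G p (x - p)

/-- `(f, G)` is a `Lip(1+γ)` jet on `Ω` with seminorm at most `H`. -/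
structure IsLipJet (Ω : Set X) (f : X → V) (G : X → X →L[ℝ] V) (H γ : ℝ) : Prop where
  norm_le : ∀ u ∈ Ω, ‖f u‖ ≤ H
  norm_deriv_le : ∀ u ∈ Ω, ‖G u‖ ≤ H
  norm_deriv_sub_le : ∀ u ∈ Ω, ∀ v ∈ Ω, ‖G u - G v‖ ≤ H * ‖u - v‖ ^ γ
  norm_remainder_le : ∀ u ∈ Ω, ∀ v ∈ Ω, ‖f u - f v - G v (u - v)‖ ≤ H * ‖u - v‖ ^ (1 + γ)

theorem hasFDerivAt_taylorAt (f : X → V) (G : X → X →L[ℝ] V) (p x : X) :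
    HasFDerivAt (taylorAt f G p) (G p) x := by
  have h := (((G p).hasFDerivAt (x := x - p)).comp x ((hasFDerivAt_id x).sub_const p)).const_add
    (f p)
  rwa [ContinuousLinearMap.comp_id] at h

theorem rpow_mul_le {k t γ : ℝ} (hk : 1 ≤ k) (ht : 0 ≤ t) (hγ1 : γ ≤ 1) :
    (k * t) ^ γ ≤ k * t ^ γ := by
  rw [Real.mul_rpow (by linarith) ht]
  gcongr
  exact (Real.rpow_le_rpow_of_exponent_le hk hγ1).trans_eq (Real.rpow_one k)

variable {Ω : Set X} {f : X → V} {G : X → X →L[ℝ] V} {H γ : ℝ}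

theorem IsLipJet.norm_taylorAt_sub_le (hJ : IsLipJet Ω f G H γ) (hH : 0 ≤ H) (hγ0 : 0 < γ)
    (hγ1 : γ ≤ 1) {p q x : X} (hp : p ∈ Ω) (hq : q ∈ Ω) {k t : ℝ} (hk : 1 ≤ k) (ht : 0 ≤ t)
    (hpq : ‖q - p‖ ≤ k * t) (hx : ‖x - q‖ ≤ k * t) :
    ‖taylorAt f G q x - taylorAt f G p x‖ ≤ 2 * k ^ 2 * (H * t ^ (1 + γ)) := by
  have e : taylorAt f G q x - taylorAt f G p x =
      (f q - f p - G p (q - p)) + (G q - G p) (x - q) := by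
    simp only [taylorAt, sub_apply, map_sub]
    abel
  have hkt : 0 ≤ k * t := by positivity
  have h1 : ‖f q - f p - G p (q - p)‖ ≤ H * (k * t) ^ (1 + γ) :=
    (hJ.norm_remainder_le q hq p hp).trans (by gcongr)
  have h2 : ‖(G q - G p) (x - q)‖ ≤ H * (k * t) ^ γ * (k * t) :=
    ((G q - G p).le_opNorm _).trans (mul_le_mul ((hJ.norm_deriv_sub_le q hq p hp).trans
      (by gcongr)) hx (norm_nonneg _) (by positivity))
  rw [e]
  refine (norm_add_le_of_le h1 h2).trans ?_
  rw [Real.rpow_one_add' hkt (by linarith), Real.rpow_one_add' ht (by linarith)]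
  calc _ = 2 * (H * (k * t)) * (k * t) ^ γ := by ring
    _ ≤ 2 * (H * (k * t)) * (k * t ^ γ) := by gcongr; exact rpow_mul_le hk ht hγ1
    _ = _ := by ring

end Jets

/-- Whitney's extension, with its estimates near each point off `Ω`, relative to the Taylor
polynomial at a nearest point of `Ω`. -/
theorem exists_locally_bounded_extension (X : Type*) [NormedAddCommGroup X]
    [InnerProductSpace ℝ X] [FiniteDimensional ℝ X] :
    ∃ A : ℝ, 0 ≤ A ∧ ∀ {V : Type*} [NormedAddCommGroup V] [NormedSpace ℝ V] {Ω : Set X}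
      {f : X → V} {G : X → X →L[ℝ] V} {H γ R : ℝ}, IsClosed Ω → Ω.Nonempty →
      (∀ x, infDist x Ω ≤ R) → 0 ≤ H → 0 < γ → γ ≤ 1 → IsLipJet Ω f G H γ →
      ∃ F : X → V, (∀ u ∈ Ω, F u = f u) ∧ ∀ x₀ ∉ Ω, ∀ p ∈ Ω, ‖x₀ - p‖ = infDist x₀ Ω →
        ScaledC11On (ball x₀ (infDist x₀ Ω / 8)) (fun x => F x - taylorAt f G p x)
          (A * H * infDist x₀ Ω ^ (1 + γ)) (infDist x₀ Ω) := by
  classical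
  obtain ⟨N, K, hK, hpart⟩ := exists_whitney_partition X
  refine ⟨N * (4 * (K * 72)), by positivity, fun {V} _ _ Ω f G H γ R hΩ hne hR hH hγ0 hγ1 hJ => ?_⟩
  have : ProperSpace X := FiniteDimensional.proper ℝ X
  obtain ⟨φ, hφ⟩ := hpart Ω R hΩ hne hR
  choose π hπΩ hπ using fun x : X => hΩ.exists_infDist_eq_dist hne x
  refine ⟨fun x => if x ∈ Ω then f x else ∑ᶠ b, φ b x • taylorAt f G (π b) x,
    fun u hu => if_pos hu, fun x₀ hx₀ p hp hxp => ?_⟩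
  have hδ : 0 < infDist x₀ Ω := (hΩ.notMem_iff_infDist_pos hne).1 hx₀
  obtain ⟨I, hIN, hI, hI0, hI1⟩ := hφ x₀ hx₀
  have hfar : ∀ b, ‖b - π b‖ ≤ infDist x₀ Ω + ‖b - x₀‖ := fun b => by
    rw [← dist_eq_norm, ← dist_eq_norm, ← hπ]; exact infDist_le_infDist_add_dist
  have hoff : ∀ x ∈ Ω, infDist x₀ Ω ≤ ‖x - x₀‖ := fun x hx => by
    rw [← dist_eq_norm']; exact infDist_le_dist_of_mem hx
  generalize infDist x₀ Ω = δ at *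
  have hU : ∀ x ∈ ball x₀ (δ / 8), ‖x - x₀‖ < δ / 8 := fun x hx => mem_ball_iff_norm.1 hx
  have hsum : ∀ x ∈ ball x₀ (δ / 8),
      (if x ∈ Ω then f x else ∑ᶠ b, φ b x • taylorAt f G (π b) x) - taylorAt f G p x =
        ∑ b ∈ I, φ b x • (taylorAt f G (π b) x - taylorAt f G p x) := fun x hx => by
    rw [if_neg fun h => absurd (hoff x h) (by linarith [hU x hx]),
      finsum_eq_sum_of_support_subset (s := I) _ fun b hb => ?_]
    · simp only [smul_sub, Finset.sum_sub_distrib]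
      rw [← Finset.sum_smul, hI1 x hx, one_smul]
    · by_contra h
      exact hb (by simp only [hI0 b h x hx, zero_smul])
  have hdiff : ∀ b ∈ I, ScaledC11On (ball x₀ (δ / 8))
      (fun x => taylorAt f G (π b) x - taylorAt f G p x) (72 * (H * δ ^ (1 + γ))) δ :=
    fun b hb => by
    have h1 := (hI b hb).1
    have h2 := hfar b
    have hpq : ‖π b - p‖ ≤ 6 * δ := by
      have e : π b - p = (x₀ - p) + (b - x₀) - (b - π b) := by abel
      have := norm_sub_le ((x₀ - p) + (b - x₀)) (b - π b)
      have := norm_add_le (x₀ - p) (b - x₀)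
      rw [e]
      linarith
    have hG : ‖G (π b) - G p‖ ≤ 72 * (H * δ ^ γ) := by
      calc _ ≤ H * ‖π b - p‖ ^ γ := hJ.norm_deriv_sub_le _ (hπΩ b) p hp
        _ ≤ H * (6 * δ) ^ γ := by gcongr
        _ ≤ H * (6 * δ ^ γ) := by gcongr; exact rpow_mul_le (by norm_num) hδ.le hγ1
        _ ≤ _ := by nlinarith [mul_nonneg hH (Real.rpow_nonneg hδ.le γ)]
    refine .of_hasFDerivAt (h' := fun _ => G (π b) - G p)
      (fun x _ => (hasFDerivAt_taylorAt f G _ x).sub (hasFDerivAt_taylorAt f G p x))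
      (fun x hx => ?_) (fun x _ => ?_) (fun x _ y _ => ?_)
    · have hxq : ‖x - π b‖ ≤ 6 * δ := by
        have e : x - π b = (x - x₀) + (b - π b) - (b - x₀) := by abel
        have := norm_sub_le ((x - x₀) + (b - π b)) (b - x₀)
        have := norm_add_le (x - x₀) (b - π b)
        rw [e]
        linarith [hU x hx]
      refine (hJ.norm_taylorAt_sub_le hH hγ0 hγ1 hp (hπΩ b) (by norm_num) hδ.le hpq hxq).trans_eq ?_
      norm_num
    · rw [Real.rpow_one_add' hδ.le (by linarith), le_div_iff₀ hδ]
      calc _ ≤ 72 * (H * δ ^ γ) * δ := by gcongr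
        _ = _ := by ring
    · rw [sub_self, norm_zero]
      positivity
  refine ((ScaledC11On.sum fun b hb => ((hI b hb).2.smul (hdiff b hb) (convex_ball _ _) hK
    (by positivity) hδ)).congr isOpen_ball hsum).mono_const hδ ?_
  calc (I.card : ℝ) * (4 * (K * (72 * (H * δ ^ (1 + γ)))))
      ≤ N * (4 * (K * (72 * (H * δ ^ (1 + γ))))) := by gcongr
    _ = _ := by ring

/-- Whitney's extension theorem when every point is within distance `1` of `Ω`. -/
theorem exists_extension_of_infDist_le_one (X : Type*) [NormedAddCommGroup X]
    [InnerProductSpace ℝ X] [FiniteDimensional ℝ X] :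
    ∃ C : ℝ, 0 < C ∧ ∀ {V : Type*} [NormedAddCommGroup V] [NormedSpace ℝ V] {Ω : Set X}
      {f : X → V} {G : X → X →L[ℝ] V} {H γ : ℝ}, IsClosed Ω → Ω.Nonempty →
      (∀ x, infDist x Ω ≤ 1) → 0 ≤ H → 0 < γ → γ ≤ 1 → IsLipJet Ω f G H γ →
      ∃ F : X → V, Differentiable ℝ F ∧ (∀ u ∈ Ω, F u = f u ∧ fderiv ℝ F u = G u) ∧
        (∀ u, ‖F u‖ ≤ C * H) ∧ (∀ u, ‖fderiv ℝ F u‖ ≤ C * H) ∧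
        ∀ u v, ‖fderiv ℝ F u - fderiv ℝ F v‖ ≤ C * H * ‖u - v‖ ^ γ := by
  obtain ⟨A, hA, hext⟩ := exists_locally_bounded_extension X
  refine ⟨17 * (A + 8), by positivity, fun {V} _ _ Ω f G H γ hΩ hne hR hH hγ0 hγ1 hJ => ?_⟩
  have : ProperSpace X := FiniteDimensional.proper ℝ X
  obtain ⟨F, hF, hloc⟩ := hext hΩ hne hR hH hγ0 hγ1 hJ
  have hnear : ∀ x, ∃ p ∈ Ω, ‖x - p‖ = infDist x Ω := fun x => by
    obtain ⟨p, hp, h⟩ := hΩ.exists_infDist_eq_dist hne x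
    exact ⟨p, hp, by rw [h, dist_eq_norm]⟩
  have hle : ∀ x, ∀ u ∈ Ω, infDist x Ω ≤ ‖x - u‖ := fun x u hu => by
    rw [← dist_eq_norm]; exact infDist_le_dist_of_mem hu
  have hpos : ∀ x ∉ Ω, 0 < infDist x Ω := fun x hx => (hΩ.notMem_iff_infDist_pos hne).1 hx
  have hFd : ∀ x ∉ Ω, ∀ p ∈ Ω, ‖x - p‖ = infDist x Ω → ∀ y ∈ ball x (infDist x Ω / 8),
      HasFDerivAt F (fderiv ℝ (fun x => F x - taylorAt f G p x) y + G p) y :=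
    fun x hx p hp hxp y hy => by
      have h := ((hloc x hx p hp hxp).differentiableAt y hy).hasFDerivAt.fun_add
        (hasFDerivAt_taylorAt f G p y)
      simpa using h
  have hself : ∀ x ∉ Ω, x ∈ ball x (infDist x Ω / 8) := fun x hx =>
    mem_ball_self (by linarith [hpos x hx])
  have htaylor : ∀ x, ∀ u ∈ Ω, ‖F x - taylorAt f G u x‖ ≤ (A + 8) * H * ‖x - u‖ ^ (1 + γ) :=
    fun x u hu => by
    have hs : 0 ≤ H * ‖x - u‖ ^ (1 + γ) := by positivity
    by_cases hx : x ∈ Ω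
    · rw [hF x hx, taylorAt, ← sub_sub]
      nlinarith [hJ.norm_remainder_le x hx u hu]
    · obtain ⟨p, hp, hxp⟩ := hnear x
      have hxu := hle x u hu
      have h1 := (hloc x hx p hp hxp).norm_le x (hself x hx)
      have hpu : ‖p - u‖ ≤ 2 * ‖x - u‖ := by
        have := norm_sub_le (x - u) (x - p)
        rw [sub_sub_sub_cancel_left] at this
        linarith
      have h2 := hJ.norm_taylorAt_sub_le hH hγ0 hγ1 hu hp (x := x) one_le_two (norm_nonneg _) hpu
        (by linarith [norm_nonneg (x - u)])
      have h3 : A * H * infDist x Ω ^ (1 + γ) ≤ A * H * ‖x - u‖ ^ (1 + γ) := by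
        have := (hpos x hx).le
        gcongr
      calc _ ≤ ‖F x - taylorAt f G p x‖ + ‖taylorAt f G p x - taylorAt f G u x‖ :=
            norm_sub_le_norm_sub_add_norm_sub _ _ _
        _ ≤ A * H * ‖x - u‖ ^ (1 + γ) + 2 * 2 ^ 2 * (H * ‖x - u‖ ^ (1 + γ)) :=
            add_le_add (h1.trans h3) h2
        _ = _ := by ring
  have hFΩ : ∀ u ∈ Ω, HasFDerivAt F (G u) u := fun u hu => by
    rw [hasFDerivAt_iff_isLittleO, Asymptotics.isLittleO_iff]
    intro c hc
    have hlim : Filter.Tendsto (fun x => (A + 8) * H * ‖x - u‖ ^ γ) (nhds u) (nhds 0) := by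
      have hcont : Continuous fun x => (A + 8) * H * ‖x - u‖ ^ γ :=
        continuous_const.mul ((by fun_prop : Continuous fun x : X => ‖x - u‖).rpow_const
          fun _ => Or.inr hγ0.le)
      simpa [Real.zero_rpow hγ0.ne'] using hcont.tendsto u
    filter_upwards [hlim.eventually_le_const hc] with x hx
    have h := htaylor x u hu
    rw [taylorAt, ← sub_sub, ← hF u hu, Real.rpow_one_add' (norm_nonneg _) (by linarith)] at h
    calc _ ≤ (A + 8) * H * (‖x - u‖ * ‖x - u‖ ^ γ) := h
      _ = (A + 8) * H * ‖x - u‖ ^ γ * ‖x - u‖ := by ring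
      _ ≤ _ := by gcongr
  have hderiv : ∀ x, ∀ u ∈ Ω, ‖fderiv ℝ F x - G u‖ ≤ (A + 8) * H * ‖x - u‖ ^ γ :=
    fun x u hu => by
    have hs : 0 ≤ H * ‖x - u‖ ^ γ := by positivity
    by_cases hx : x ∈ Ω
    · rw [(hFΩ x hx).fderiv]
      nlinarith [hJ.norm_deriv_sub_le x hx u hu]
    · obtain ⟨p, hp, hxp⟩ := hnear x
      have hxu := hle x u hu
      have hδ := hpos x hx
      have h1 := (hloc x hx p hp hxp).norm_fderiv_le x (hself x hx)
      have hpu : ‖p - u‖ ≤ 2 * ‖x - u‖ := by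
        have := norm_sub_le (x - u) (x - p)
        rw [sub_sub_sub_cancel_left] at this
        linarith
      rw [(hFd x hx p hp hxp x (hself x hx)).fderiv, add_sub_assoc]
      have h2 : A * H * infDist x Ω ^ (1 + γ) / infDist x Ω ≤ A * H * ‖x - u‖ ^ γ := by
        rw [Real.rpow_one_add' hδ.le (by linarith)]
        calc _ = A * H * infDist x Ω ^ γ := by field_simp
          _ ≤ _ := by gcongr
      have h3 : ‖G p - G u‖ ≤ 2 * (H * ‖x - u‖ ^ γ) := by
        calc _ ≤ H * ‖p - u‖ ^ γ := hJ.norm_deriv_sub_le p hp u hu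
          _ ≤ H * (2 * ‖x - u‖) ^ γ := by gcongr
          _ ≤ H * (2 * ‖x - u‖ ^ γ) := by
            gcongr; exact rpow_mul_le one_le_two (norm_nonneg _) hγ1
          _ = _ := by ring
      refine (norm_add_le_of_le (h1.trans h2) h3).trans ?_
      nlinarith
  refine ⟨F, fun x => ?_, fun u hu => ⟨hF u hu, (hFΩ u hu).fderiv⟩, fun x => ?_, fun x => ?_,
    fun x y => ?_⟩
  · by_cases hx : x ∈ Ω
    · exact (hFΩ x hx).differentiableAt
    · obtain ⟨p, hp, hxp⟩ := hnear x
      exact (hFd x hx p hp hxp x (hself x hx)).differentiableAt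
  · obtain ⟨p, hp, hxp⟩ := hnear x
    have hxp1 : ‖x - p‖ ≤ 1 := hxp.trans_le (hR x)
    have h1 : ‖F x - taylorAt f G p x‖ ≤ (A + 8) * H * 1 := (htaylor x p hp).trans (by
      gcongr
      exact Real.rpow_le_one (norm_nonneg _) hxp1 (by linarith))
    have h2 : ‖taylorAt f G p x‖ ≤ H + H * 1 :=
      norm_add_le_of_le (hJ.norm_le p hp) (((G p).le_opNorm _).trans
        (mul_le_mul (hJ.norm_deriv_le p hp) hxp1 (norm_nonneg _) hH))
    have h3 := norm_add_le_of_le h1 h2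
    rw [sub_add_cancel] at h3
    nlinarith [mul_nonneg hA hH]
  · obtain ⟨p, hp, hxp⟩ := hnear x
    have hxp1 : ‖x - p‖ ≤ 1 := hxp.trans_le (hR x)
    have h1 : ‖fderiv ℝ F x - G p‖ ≤ (A + 8) * H * 1 := (hderiv x p hp).trans (by
      gcongr
      exact Real.rpow_le_one (norm_nonneg _) hxp1 hγ0.le)
    have h3 := norm_add_le_of_le h1 (hJ.norm_deriv_le p hp)
    rw [sub_add_cancel] at h3
    nlinarith [mul_nonneg hA hH]
  · have hs : 0 ≤ H * ‖x - y‖ ^ γ := by positivity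
    obtain ⟨p, hp, hxp⟩ := hnear x
    by_cases hy : x ∉ Ω ∧ ‖x - y‖ < infDist x Ω / 8
    · have hyb : y ∈ ball x (infDist x Ω / 8) := by rw [mem_ball_iff_norm']; exact hy.2
      have hx := hy.1
      have hδ := hpos x hx
      have h1 := (hloc x hx p hp hxp).norm_fderiv_sub_le x (hself x hx) y hyb
      rw [(hFd x hx p hp hxp x (hself x hx)).fderiv, (hFd x hx p hp hxp y hyb).fderiv,
        add_sub_add_right_eq_sub]
      refine h1.trans ?_
      have h2 : infDist x Ω ^ (1 + γ) / infDist x Ω ^ 2 * ‖x - y‖ ≤ ‖x - y‖ ^ γ := by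
        rcases (norm_nonneg (x - y)).eq_or_lt with h0 | h0
        · rw [← h0, mul_zero]; positivity
        · have e : infDist x Ω ^ (1 + γ) / infDist x Ω ^ 2 = infDist x Ω ^ (γ - 1) := by
            rw [← Real.rpow_natCast, ← Real.rpow_sub hδ]
            congr 1
            push_cast
            ring
          rw [e]
          calc _ ≤ ‖x - y‖ ^ (γ - 1) * ‖x - y‖ := by
                gcongr ?_ * _
                exact Real.rpow_le_rpow_of_nonpos h0 (by linarith) (by linarith)
            _ = _ := by rw [Real.rpow_sub_one h0.ne', div_mul_cancel₀ _ h0.ne']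
      calc _ = A * H * (infDist x Ω ^ (1 + γ) / infDist x Ω ^ 2 * ‖x - y‖) := by ring
        _ ≤ A * H * ‖x - y‖ ^ γ := by gcongr
        _ ≤ _ := by nlinarith
    · have h8 : ‖x - p‖ ≤ 8 * ‖x - y‖ := by
        by_cases hx : x ∈ Ω
        · rw [hxp, infDist_zero_of_mem hx]; positivity
        · have := not_lt.1 fun h => hy ⟨hx, h⟩
          linarith
      have h9 : ‖y - p‖ ≤ 9 * ‖x - y‖ := by
        have := norm_sub_le (x - p) (x - y)
        rw [sub_sub_sub_cancel_left] at this
        linarith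
      have hB : ∀ z (k : ℝ), 1 ≤ k → ‖z - p‖ ≤ k * ‖x - y‖ →
          ‖fderiv ℝ F z - G p‖ ≤ (A + 8) * H * (k * ‖x - y‖ ^ γ) := fun z k hk hz => by
        calc _ ≤ (A + 8) * H * ‖z - p‖ ^ γ := hderiv z p hp
          _ ≤ (A + 8) * H * (k * ‖x - y‖) ^ γ := by gcongr
          _ ≤ _ := by gcongr; exact rpow_mul_le hk (norm_nonneg _) hγ1
      have h3 := norm_sub_le_of_le (hB x 8 (by norm_num) h8) (hB y 9 (by norm_num) h9)
      rw [sub_sub_sub_cancel_right] at h3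
      refine h3.trans_eq ?_
      ring

/-- A jet may be extended by zero to the points at distance at least `1` from its domain. -/
theorem exists_isLipJet_of_infDist_le_one {X V : Type*} [NormedAddCommGroup X]
    [NormedSpace ℝ X] [NormedAddCommGroup V] [NormedSpace ℝ V] {Ω : Set X} {f : X → V}
    {G : X → X →L[ℝ] V} {H γ : ℝ} (hΩ : IsClosed Ω) (hH : 0 ≤ H) (hγ0 : 0 < γ)
    (hJ : IsLipJet Ω f G H γ) :
    ∃ (Ω' : Set X) (f' : X → V) (G' : X → X →L[ℝ] V), IsClosed Ω' ∧ Ω'.Nonempty ∧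
      (∀ x, infDist x Ω' ≤ 1) ∧ IsLipJet Ω' f' G' (2 * H) γ ∧
      ∀ u ∈ Ω, u ∈ Ω' ∧ f' u = f u ∧ G' u = G u := by
  classical
  let Z : Set X := ⋂ u ∈ Ω, {x | 1 ≤ ‖x - u‖}
  have hZ : IsClosed Z := isClosed_biInter fun u _ => isClosed_le continuous_const (by fun_prop)
  have hmemZ : ∀ {x}, x ∈ Z ↔ ∀ u ∈ Ω, 1 ≤ ‖x - u‖ := by simp [Z]
  have hdist : ∀ x, ∃ y ∈ Ω ∪ Z, ‖x - y‖ ≤ 1 := fun x => by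
    by_cases hx : x ∈ Z
    · exact ⟨x, Or.inr hx, by simp⟩
    · rw [hmemZ] at hx
      push Not at hx
      obtain ⟨u, hu, h⟩ := hx
      exact ⟨u, Or.inl hu, h.le⟩
  have hnot : ∀ x ∈ Z, x ∉ Ω := fun x hx hxΩ => by
    have := hmemZ.1 hx x hxΩ
    simp at this
    linarith
  have hone : ∀ {x u : X} {β : ℝ}, 0 < β → 1 ≤ ‖x - u‖ → 1 ≤ ‖x - u‖ ^ β :=
    fun hβ h => Real.one_le_rpow h hβ.le
  refine ⟨Ω ∪ Z, fun x => if x ∈ Ω then f x else 0, fun x => if x ∈ Ω then G x else 0,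
    hΩ.union hZ, ?_, fun x => ?_, ⟨?_, ?_, ?_, ?_⟩,
    fun u hu => ⟨Or.inl hu, if_pos hu, if_pos hu⟩⟩
  · obtain ⟨y, hy, -⟩ := hdist 0
    exact ⟨y, hy⟩
  · obtain ⟨y, hy, h⟩ := hdist x
    exact (infDist_le_dist_of_mem hy).trans (by rwa [dist_eq_norm])
  · intro u _
    split_ifs with hu
    · linarith [hJ.norm_le u hu]
    · simpa using hH
  · intro u _
    split_ifs with hu
    · linarith [hJ.norm_deriv_le u hu]
    · simpa using hH
  · rintro u (hu | hu) v (hv | hv)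
    · simp only [if_pos hu, if_pos hv]
      have : 0 ≤ H * ‖u - v‖ ^ γ := by positivity
      linarith [hJ.norm_deriv_sub_le u hu v hv]
    · simp only [if_pos hu, if_neg (hnot v hv), sub_zero]
      have h1 := hone hγ0 (hmemZ.1 hv u hu)
      rw [norm_sub_rev] at h1
      nlinarith [hJ.norm_deriv_le u hu]
    · simp only [if_neg (hnot u hu), if_pos hv, zero_sub, norm_neg]
      have h1 := hone hγ0 (hmemZ.1 hu v hv)
      nlinarith [hJ.norm_deriv_le v hv]
    · simp only [if_neg (hnot u hu), if_neg (hnot v hv), sub_zero, norm_zero]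
      positivity
  · rintro u (hu | hu) v (hv | hv)
    · simp only [if_pos hu, if_pos hv]
      have : 0 ≤ H * ‖u - v‖ ^ (1 + γ) := by positivity
      linarith [hJ.norm_remainder_le u hu v hv]
    · simp only [if_pos hu, if_neg (hnot v hv), sub_zero, zero_apply]
      have h1 := hone (β := 1 + γ) (by linarith) (hmemZ.1 hv u hu)
      rw [norm_sub_rev] at h1
      nlinarith [hJ.norm_le u hu]
    · simp only [if_neg (hnot u hu), if_pos hv, zero_sub]
      have h0 := hmemZ.1 hu v hv
      have h1 := hone hγ0 h0
      have h2 : ‖G v (u - v)‖ ≤ H * ‖u - v‖ :=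
        ((G v).le_opNorm _).trans (by gcongr; exact hJ.norm_deriv_le v hv)
      have h3 := norm_sub_le (-f v) (G v (u - v))
      rw [norm_neg] at h3
      rw [Real.rpow_one_add' (norm_nonneg _) (by linarith)]
      have h4 : 1 ≤ ‖u - v‖ * ‖u - v‖ ^ γ := one_le_mul_of_one_le_of_one_le h0 h1
      have h5 : ‖u - v‖ ≤ ‖u - v‖ * ‖u - v‖ ^ γ := le_mul_of_one_le_right (norm_nonneg _) h1
      nlinarith [hJ.norm_le v hv, mul_le_mul_of_nonneg_left h4 hH,
        mul_le_mul_of_nonneg_left h5 hH]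
    · simp only [if_neg (hnot u hu), if_neg (hnot v hv), sub_zero, zero_apply, norm_zero]
      positivity

/-- Whitney extension theorem, `Lip(1+γ)` case: a bounded
`Lip(1+γ)` pair `(f, G)` on a closed set `Ω ⊆ ℝ^n` extends to a differentiable
function `F` on all of `ℝ^n` with `F = f`, `DF = G` on `Ω`, with `F`, `DF` bounded
by `cH` and `DF` globally `γ`-Hölder with constant `cH`, where `c = c(γ, n)`. -/
theorem whitney_extension_lip_one_plus_gamma (n : ℕ) (γ : ℝ)
    (hγ0 : 0 < γ) (hγ1 : γ ≤ 1) :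
    ∃ c : ℝ, 0 < c ∧
      ∀ (d' : ℕ) (Ω : Set (E n)) (f : E n → E d') (G : E n → (E n →L[ℝ] E d')) (H : ℝ),
        IsClosed Ω → 0 ≤ H →
        (∀ u ∈ Ω, ‖f u‖ ≤ H) →
        (∀ u ∈ Ω, ‖G u‖ ≤ H) →
        (∀ u ∈ Ω, ∀ u' ∈ Ω, ‖G u - G u'‖ ≤ H * ‖u - u'‖ ^ γ) →
        (∀ u ∈ Ω, ∀ u' ∈ Ω, ‖f u - f u' - G u' (u - u')‖ ≤ H * ‖u - u'‖ ^ (1 + γ)) →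
        ∃ F : E n → E d', Differentiable ℝ F ∧
          (∀ u ∈ Ω, F u = f u ∧ fderiv ℝ F u = G u) ∧
          (∀ u, ‖F u‖ ≤ c * H) ∧
          (∀ u, ‖fderiv ℝ F u‖ ≤ c * H) ∧
          (∀ u u', ‖fderiv ℝ F u - fderiv ℝ F u'‖ ≤ c * H * ‖u - u'‖ ^ γ) := by
  obtain ⟨C, hC, hext⟩ := exists_extension_of_infDist_le_one (E n)
  refine ⟨C * 2, by positivity, fun d' Ω f G H hΩ hH hf hG hGG hfG => ?_⟩
  obtain ⟨Ω', f', G', hΩ', hne, hdist, hJ, hsub⟩ :=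
    exists_isLipJet_of_infDist_le_one hΩ hH hγ0 ⟨hf, hG, hGG, hfG⟩
  obtain ⟨F, hF, hFΩ, h0, h1, h2⟩ := hext hΩ' hne hdist (by positivity) hγ0 hγ1 hJ
  refine ⟨F, hF, fun u hu => ?_, by simpa only [mul_assoc] using h0,
    by simpa only [mul_assoc] using h1, by simpa only [mul_assoc] using h2⟩
  obtain ⟨hu', hfu, hGu⟩ := hsub u hu
  rw [← hfu, ← hGu]
  exact hFΩ u hu'
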